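/- For every m ≥ 2, there exists a convex body K′ in ℝ^m such that K′ is not a polytope (not the convex hull of a finite set of points) and the only similarity transformation A of ℝ^m with A(K′) = K′ is the identity map. -/

import Mathlib

/-!
The body is the convex hull `K` of the ball of radius `1/2` about the origin together with the
points `± e o` and `p i = e o / 4 + r i • e i` (`i ≠ o`), where `e` is the standard basis, `o` is
a fixed index and the numbers `r i = 1/2 + 1/(i+3)` are distinct.

* `K` lies in the closed unit ball and contains the antipodal unit vectors `± e o`.  So if
  `A x = c • U x + v` preserves `K`, then comparing diameters gives `c = 1`, and the
  parallelogram law for `v ± c • U (e o)` gives `v = 0` (`similarity_eq_linear`).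
* The linear isometry `U` now permutes the extreme points of `K`, which are among the generators.
  Every `p i`, including `p o = e o`, is extreme, because the functional `⟪p i, ·⟫` attains its
  maximum over the generators only at `p i` (`mem_extremePoints_of_inner`).  For `i ≠ o` the norms
  `‖p i‖` are distinct and lie strictly between `1/2` and `1`, so `U` fixes `p i`; and `U (e o)`
  is `± e o`, the sign being `+` since `⟪p i, e o⟫ = 1/4 ≠ 0` for any `i ≠ o`; such an `i`
  exists as `2 ≤ m`.  Hence `U` fixes the standard basis.
* `K` is not a polytope, since an arc of the sphere of radius `1/2` near `-e i / 2` (`i ≠ o`)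
  consists of extreme points of `K`, again by `mem_extremePoints_of_inner`.
-/

open Set

noncomputable section

/-- `ℝᵐ` as a Euclidean space. -/
abbrev Euc (m : ℕ) := EuclideanSpace ℝ (Fin m)

/-- A similarity transformation of `ℝᵐ`: `x ↦ c • U x + v` with `c > 0`,
`U` an orthogonal linear transformation, and `v ∈ ℝᵐ`. -/
def IsSimilarity {m : ℕ} (A : Euc m → Euc m) : Prop :=
  ∃ (c : ℝ) (U : Euc m ≃ₗᵢ[ℝ] Euc m) (v : Euc m), 0 < c ∧ ∀ x, A x = c • U x + v

namespace AsymmetricBody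

variable {m : ℕ}

/-! ### The body and its generators -/

/-- The standard basis vectors of `ℝᵐ`. -/
def e (i : Fin m) : Euc m := EuclideanSpace.single i (1 : ℝ)

/-- Pairwise distinct lengths in `(1/2, 1)`. -/
def r (i : Fin m) : ℝ := 1 / 2 + 1 / ((i : ℝ) + 3)

/-- The apices of the body, apart from `-e o`: `e o` itself, and points `e o / 4 + r i • e i` for
`i ≠ o`. -/
def p (o i : Fin m) : Euc m := if i = o then e o else (1 / 4 : ℝ) • e o + r i • e i

/-- The generators of the body: the points `p o i`, the antipode `-e o` of `p o o`, and a
ball. -/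
def gens (o : Fin m) : Set (Euc m) := insert (-e o) (range (p o)) ∪ Metric.closedBall 0 (1 / 2)

/-- The convex body with no nontrivial self-similarity. -/
def body (o : Fin m) : Set (Euc m) := convexHull ℝ (gens o)

lemma inner_e (i j : Fin m) : inner ℝ (e i) (e j) = if i = j then (1 : ℝ) else 0 :=
  orthonormal_iff_ite.1 EuclideanSpace.orthonormal_single i j

@[simp]
lemma norm_e (o : Fin m) : ‖e o‖ = 1 := by simp [e]

lemma p_self (o : Fin m) : p o o = e o := by simp [p]

lemma p_of_ne {o i : Fin m} (h : i ≠ o) : p o i = (1 / 4 : ℝ) • e o + r i • e i := by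
  simp [p, h]

lemma r_gt (i : Fin m) : 1 / 2 < r i := by
  unfold r
  have : (0 : ℝ) < 1 / ((i : ℝ) + 3) := by positivity
  linarith

lemma r_le (i : Fin m) : r i ≤ 5 / 6 := by
  unfold r
  have : 1 / ((i : ℝ) + 3) ≤ 1 / 3 := by
    apply one_div_le_one_div_of_le (by norm_num)
    have : (0 : ℝ) ≤ (i : ℝ) := by positivity
    linarith
  linarith

lemma r_inj {i j : Fin m} (h : r i = r j) : i = j := by
  unfold r at h
  have h' : (1 : ℝ) / ((i : ℝ) + 3) = 1 / ((j : ℝ) + 3) := by linarith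
  rw [one_div, one_div, inv_inj] at h'
  exact Fin.ext (by exact_mod_cast add_right_cancel h')

lemma inner_p_e {o i : Fin m} (h : i ≠ o) : inner ℝ (p o i) (e o) = (1 / 4 : ℝ) := by
  simp [p_of_ne h, inner_add_left, inner_smul_left, inner_e, h]

lemma inner_p_p {o i j : Fin m} (hi : i ≠ o) (hj : j ≠ o) :
    inner ℝ (p o i) (p o j) = (1 / 16 : ℝ) + if i = j then r i * r j else 0 := by
  simp only [p_of_ne hi, p_of_ne hj, inner_add_left, inner_add_right, inner_smul_left,
    inner_smul_right, inner_e]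
  simp [hi, hj.symm, mul_comm (r j)]
  norm_num

lemma inner_p_self_gt (o i : Fin m) : (5 / 16 : ℝ) < inner ℝ (p o i) (p o i) := by
  by_cases h : i = o
  · subst h
    norm_num [p_self, inner_e]
  · rw [inner_p_p h h, if_pos rfl]
    nlinarith [r_gt i]

lemma inner_p_self_lt {o i : Fin m} (h : i ≠ o) : inner ℝ (p o i) (p o i) < (1 : ℝ) := by
  rw [inner_p_p h h, if_pos rfl]
  nlinarith [r_gt i, r_le i]

lemma inner_self_of_ball {s : Euc m} (hs : s ∈ Metric.closedBall (0 : Euc m) (1 / 2)) :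
    inner ℝ s s ≤ (1 / 4 : ℝ) := by
  rw [mem_closedBall_zero_iff] at hs
  rw [real_inner_self_eq_norm_sq]
  nlinarith [norm_nonneg s]

/-! ### Extreme points -/

/-- A generator at which its own inner-product functional is uniquely maximal is extreme: the hull
then lies in the convex set `{p} ∪ {x | ⟪p, x⟫ < ⟪p, p⟫}`. -/
lemma mem_extremePoints_of_inner {S : Set (Euc m)} {q : Euc m} (hq : q ∈ S)
    (h : ∀ s ∈ S, s ≠ q → inner ℝ q s < (inner ℝ q q : ℝ)) :
    q ∈ (convexHull ℝ S).extremePoints ℝ := by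
  have hconv : Convex ℝ {x : Euc m | x = q ∨ inner ℝ q x < (inner ℝ q q : ℝ)} := by
    intro x hx y hy a b ha hb hab
    by_cases hxy : x = q ∧ y = q
    · left
      rw [hxy.1, hxy.2, ← add_smul, hab, one_smul]
    rcases ha.eq_or_lt with rfl | ha
    · have : b = 1 := by linarith
      simpa [this] using hy
    rcases hb.eq_or_lt with rfl | hb
    · have : a = 1 := by linarith
      simpa [this] using hx
    right
    simp only [inner_add_right, inner_smul_right]
    have hle : ∀ z : Euc m, (z = q ∨ inner ℝ q z < (inner ℝ q q : ℝ)) →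
        inner ℝ q z ≤ (inner ℝ q q : ℝ) := by
      rintro z (rfl | hz)
      exacts [le_rfl, hz.le]
    have h1 := hle x hx
    have h2 := hle y hy
    have h3 : inner ℝ q x < (inner ℝ q q : ℝ) ∨ inner ℝ q y < (inner ℝ q q : ℝ) := by
      rcases hx with hx | hx
      · rcases hy with hy | hy
        · exact absurd ⟨hx, hy⟩ hxy
        · exact Or.inr hy
      · exact Or.inl hx
    have h4 : (inner ℝ q q : ℝ) = a * inner ℝ q q + b * inner ℝ q q := by
      rw [← add_mul, hab, one_mul]
    rw [h4]
    rcases h3 with h3 | h3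
    · exact add_lt_add_of_lt_of_le (mul_lt_mul_of_pos_left h3 ha)
        (mul_le_mul_of_nonneg_left h2 hb.le)
    · exact add_lt_add_of_le_of_lt (mul_le_mul_of_nonneg_left h1 ha.le)
        (mul_lt_mul_of_pos_left h3 hb)
  have hsub : convexHull ℝ S ⊆ {x : Euc m | x = q ∨ inner ℝ q x < (inner ℝ q q : ℝ)} := by
    refine convexHull_min (fun s hs => ?_) hconv
    by_cases hsq : s = q
    · exact Or.inl hsq
    · exact Or.inr (h s hs hsq)
  rw [mem_extremePoints_iff_left]
  refine ⟨subset_convexHull ℝ S hq, ?_⟩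
  rintro x hx y hy ⟨a, b, ha, hb, hab, hxy⟩
  refine (hsub hx).resolve_right fun hlt => ?_
  have hy' : inner ℝ q y ≤ (inner ℝ q q : ℝ) := by
    rcases hsub hy with rfl | hz
    exacts [le_rfl, hz.le]
  have h1 : a * inner ℝ q x + b * inner ℝ q y = (inner ℝ q q : ℝ) := by
    rw [← inner_smul_right, ← inner_smul_right, ← inner_add_right, hxy]
  have h2 : (inner ℝ q q : ℝ) = a * inner ℝ q q + b * inner ℝ q q := by
    rw [← add_mul, hab, one_mul]
  have h3 := mul_lt_mul_of_pos_left hlt ha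
  have h4 := mul_le_mul_of_nonneg_left hy' hb.le
  linarith

lemma p_mem_gens (o i : Fin m) : p o i ∈ gens o := Or.inl (Or.inr ⟨i, rfl⟩)

lemma e_mem_gens (o : Fin m) : e o ∈ gens o := p_self o ▸ p_mem_gens o o

lemma neg_e_mem_gens (o : Fin m) : -e o ∈ gens o := Or.inl (Or.inl rfl)

lemma p_mem_extremePoints (o i : Fin m) : p o i ∈ (body o).extremePoints ℝ := by
  refine mem_extremePoints_of_inner (p_mem_gens o i) ?_
  have hi := inner_p_self_gt o i
  rintro s ((rfl | ⟨j, rfl⟩) | hs) hne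
  · rw [inner_neg_right]
    by_cases h : i = o
    · subst h
      norm_num [p_self, inner_e]
    · rw [inner_p_e h]
      linarith
  · have hji : j ≠ i := fun h => hne (by rw [h])
    by_cases h : i = o
    · subst h
      rw [real_inner_comm, p_self, inner_p_e hji, inner_e, if_pos rfl]
      norm_num
    · by_cases hj : j = o
      · subst hj
        rw [p_self, inner_p_e h]
        linarith
      · rw [inner_p_p h hj, if_neg hji.symm]
        linarith
  · -- `2⟪p, s⟫ ≤ ⟪p, p⟫ + ⟪s, s⟫ < 2⟪p, p⟫`
    have h1 := inner_self_of_ball hs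
    have h2 : (0 : ℝ) ≤ inner ℝ (p o i - s) (p o i - s) := real_inner_self_nonneg
    rw [real_inner_sub_sub_self] at h2
    linarith

/-! ### The body is a convex body in the unit ball -/

lemma isCompact_body (o : Fin m) : IsCompact (body o) := by
  unfold body gens
  rw [convexHull_union (insert_nonempty _ _) ⟨0, by simp⟩,
    (convex_closedBall (0 : Euc m) (1 / 2)).convexHull_eq]
  have hF : IsCompact (convexHull ℝ (insert (-e o) (range (p o)))) :=
    ((finite_range (p o)).insert _).isCompact_convexHull ℝ
  -- the join is the image of a compact set under `(t, a, b) ↦ (1 - t) • a + t • b`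
  have himg := ((isCompact_Icc (a := (0 : ℝ)) (b := 1)).prod
    (hF.prod (isCompact_closedBall (0 : Euc m) (1 / 2)))).image
    (f := fun x : ℝ × Euc m × Euc m => (1 - x.1) • x.2.1 + x.1 • x.2.2) (by fun_prop)
  convert himg using 1
  ext x
  simp only [mem_convexJoin, segment_eq_image, mem_image, mem_prod, Prod.exists]
  constructor
  · rintro ⟨a, ha, b, hb, t, ht, rfl⟩
    exact ⟨t, a, b, ⟨ht, ha, hb⟩, rfl⟩
  · rintro ⟨t, a, b, ⟨ht, ha, hb⟩, rfl⟩
    exact ⟨a, ha, b, hb, t, ht, rfl⟩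

lemma interior_body_nonempty (o : Fin m) : (interior (body o)).Nonempty := by
  refine ⟨0, mem_interior.2 ⟨Metric.ball 0 (1 / 2), ?_, Metric.isOpen_ball, by simp⟩⟩
  exact fun x hx => subset_convexHull ℝ _ (Or.inr (Metric.ball_subset_closedBall hx))

lemma inner_gens_le (o : Fin m) {s : Euc m} (hs : s ∈ gens o) : inner ℝ s s ≤ (1 : ℝ) := by
  rcases hs with (rfl | ⟨j, rfl⟩) | hs
  · simp
  · by_cases h : j = o
    · subst h
      simp [p_self]
    · exact (inner_p_self_lt h).le
  · linarith [inner_self_of_ball hs]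

lemma norm_body_le (o : Fin m) {x : Euc m} (hx : x ∈ body o) : ‖x‖ ≤ 1 := by
  have : body o ⊆ Metric.closedBall 0 1 := by
    refine convexHull_min (fun s hs => ?_) (convex_closedBall _ _)
    have h := inner_gens_le o hs
    rw [real_inner_self_eq_norm_sq] at h
    rw [mem_closedBall_zero_iff]
    nlinarith [norm_nonneg s]
  exact mem_closedBall_zero_iff.1 (this hx)

/-! ### Similarities preserving the body -/

/-- A similarity preserving the body is a linear isometry. -/
lemma similarity_eq_linear (o : Fin m) {A : Euc m → Euc m} {c : ℝ} {U : Euc m ≃ₗᵢ[ℝ] Euc m}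
    {v : Euc m} (hc : 0 < c) (hA : ∀ x, A x = c • U x + v) (hK : A '' body o = body o) :
    c = 1 ∧ v = 0 := by
  have he : e o ∈ body o := subset_convexHull ℝ _ (e_mem_gens o)
  have hne : -e o ∈ body o := subset_convexHull ℝ _ (neg_e_mem_gens o)
  have hc1 : 1 ≤ c := by
    -- `± e o` have preimages in the body, at distance at most `2`
    obtain ⟨x, hx, hxe⟩ := hK.symm ▸ he
    obtain ⟨y, hy, hye⟩ := hK.symm ▸ hne
    have h1 : c • U (x - y) = (2 : ℝ) • e o := by
      rw [map_sub, smul_sub, two_smul]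
      have : c • U x - c • U y = A x - A y := by rw [hA, hA]; abel
      rw [this, hxe, hye, sub_neg_eq_add]
    have h2 := congrArg norm h1
    rw [norm_smul, norm_smul, U.norm_map, norm_e, Real.norm_of_nonneg hc.le] at h2
    have h3 := norm_sub_le x y
    have h4 := norm_body_le o hx
    have h5 := norm_body_le o hy
    norm_num at h2
    nlinarith
  have h1 := norm_body_le o (hK ▸ mem_image_of_mem A he)
  have h2 := norm_body_le o (hK ▸ mem_image_of_mem A hne)
  rw [hA] at h1 h2
  rw [map_neg, smul_neg] at h2
  have h3 := parallelogram_law_with_norm ℝ v (c • U (e o))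
  rw [norm_smul, U.norm_map, norm_e, Real.norm_of_nonneg hc.le] at h3
  rw [add_comm] at h1
  rw [add_comm, ← sub_eq_add_neg] at h2
  have h4 := norm_nonneg (v + c • U (e o))
  have h5 := norm_nonneg (v - c • U (e o))
  have h6 : ‖v‖ * ‖v‖ + c * c ≤ 1 := by nlinarith
  have hc2 : c = 1 := by nlinarith [mul_self_nonneg ‖v‖]
  refine ⟨hc2, norm_eq_zero.1 ?_⟩
  subst hc2
  nlinarith [mul_self_nonneg ‖v‖]

/-- A linear isometry preserving the body fixes every `p o i`. -/
lemma map_p (o : Fin m) {i₁ : Fin m} (h₁ : i₁ ≠ o) {U : Euc m ≃ₗᵢ[ℝ] Euc m}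
    (hU : U '' body o = body o) (i : Fin m) : U (p o i) = p o i := by
  have hmem : ∀ i, U (p o i) ∈ gens o := fun i => by
    have h := mem_image_of_mem U (p_mem_extremePoints o i)
    rw [image_extremePoints, hU] at h
    exact extremePoints_convexHull_subset h
  have hfix : ∀ i, i ≠ o → U (p o i) = p o i := fun i hi => by
    have hin : inner ℝ (U (p o i)) (U (p o i)) = (inner ℝ (p o i) (p o i) : ℝ) :=
      U.inner_map_map _ _
    have hlt := inner_p_self_lt hi
    rcases hmem i with (h | ⟨j, h⟩) | h
    · rw [show U (p o i) = -e o from h, inner_neg_neg, inner_e, if_pos rfl] at hin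
      linarith
    · rw [← h] at hin ⊢
      by_cases hj : j = o
      · rw [hj, p_self, inner_e, if_pos rfl] at hin
        linarith
      · rw [inner_p_p hi hi, inner_p_p hj hj, if_pos rfl, if_pos rfl] at hin
        have hr : r j = r i := by nlinarith [r_gt i, r_gt j]
        rw [r_inj hr]
    · linarith [inner_self_of_ball h, inner_p_self_gt o i]
  by_cases hi : i = o
  · subst hi
    have hin : inner ℝ (U (p i i)) (U (p i i)) = (inner ℝ (p i i) (p i i) : ℝ) :=
      U.inner_map_map _ _
    have hone : inner ℝ (p i i) (p i i) = (1 : ℝ) := by rw [p_self, inner_e, if_pos rfl]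
    rcases hmem i with (h | ⟨j, h⟩) | h
    · have h2 : inner ℝ (U (p i i₁)) (U (p i i)) = (inner ℝ (p i i₁) (p i i) : ℝ) :=
        U.inner_map_map _ _
      rw [show U (p i i) = -e i from h, hfix i₁ h₁, p_self, inner_neg_right, inner_p_e h₁] at h2
      norm_num at h2
    · by_cases hj : j = i
      · rw [← h, hj]
      · rw [← h, hone] at hin
        linarith [inner_p_self_lt hj]
    · linarith [inner_self_of_ball h]
  · exact hfix i hi

lemma eq_id_of_map_p {o : Fin m} {U : Euc m ≃ₗᵢ[ℝ] Euc m} (h : ∀ i, U (p o i) = p o i)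
    (x : Euc m) : U x = x := by
  have ho : U (e o) = e o := by simpa [p_self] using h o
  have he : ∀ i, U (e i) = e i := fun i => by
    by_cases hi : i = o
    · rw [hi, ho]
    · have h1 := h i
      rw [p_of_ne hi, map_add, map_smul, map_smul, ho] at h1
      have hr : r i ≠ 0 := (by linarith [r_gt i] : 0 < r i).ne'
      exact smul_right_injective _ hr (add_left_cancel h1)
  have hlin : U.toLinearEquiv.toLinearMap = LinearMap.id := by
    refine (EuclideanSpace.basisFun (Fin m) ℝ).toBasis.ext fun i => ?_
    simpa [e] using he i
  exact LinearMap.congr_fun hlin x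

/-! ### The body is not a polytope -/

/-- An arc of the sphere of radius `1/2` starting from `-e i₁ / 2`. -/
def arc (o i₁ : Fin m) (t : ℝ) : Euc m := (t / 2) • e o - (√(1 - t ^ 2) / 2) • e i₁

lemma arc_mem_extremePoints {o i₁ : Fin m} (h₁ : i₁ ≠ o) {t : ℝ} (ht : t ∈ Ioo (0 : ℝ) (1 / 2)) :
    arc o i₁ t ∈ (body o).extremePoints ℝ := by
  obtain ⟨ht0, ht1⟩ := ht
  have hw : √(1 - t ^ 2) * √(1 - t ^ 2) = 1 - t ^ 2 := Real.mul_self_sqrt (by nlinarith)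
  have hw0 : 0 ≤ √(1 - t ^ 2) := Real.sqrt_nonneg _
  have hself : inner ℝ (arc o i₁ t) (arc o i₁ t) = (1 / 4 : ℝ) := by
    simp only [arc, inner_sub_left, inner_sub_right, inner_smul_left, inner_smul_right, inner_e]
    simp [h₁, h₁.symm]
    nlinarith
  have ho : inner ℝ (arc o i₁ t) (e o) = t / 2 := by
    simp [arc, inner_sub_left, inner_smul_left, inner_e, h₁]
  refine mem_extremePoints_of_inner (Or.inr ?_) ?_
  · rw [mem_closedBall_zero_iff]
    rw [real_inner_self_eq_norm_sq] at hself
    nlinarith [norm_nonneg (arc o i₁ t)]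
  rw [hself]
  rintro s ((rfl | ⟨j, rfl⟩) | hs) hne
  · rw [inner_neg_right, ho]
    linarith
  · by_cases hj : j = o
    · rw [hj, p_self, ho]
      linarith
    · have hle : inner ℝ (arc o i₁ t) (e j) ≤ (0 : ℝ) := by
        simp only [arc, inner_sub_left, inner_smul_left, inner_e, if_neg (Ne.symm hj)]
        split_ifs
        · simp only [map_div₀, conj_trivial]
          nlinarith
        · simp
      rw [p_of_ne hj, inner_add_right, inner_smul_right, inner_smul_right, ho]
      nlinarith [r_gt j]
  · -- `2⟪a, s⟫ = ⟪a, a⟫ + ⟪s, s⟫ - ‖a - s‖²` with `a ≠ s`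
    have h1 := inner_self_of_ball hs
    have h2 : (0 : ℝ) < inner ℝ (arc o i₁ t - s) (arc o i₁ t - s) :=
      real_inner_self_pos.2 (sub_ne_zero.2 hne.symm)
    rw [real_inner_sub_sub_self] at h2
    linarith

lemma arc_injective {o i₁ : Fin m} (h₁ : i₁ ≠ o) : Function.Injective (arc o i₁) := by
  intro s t h
  have h' := congrArg (fun x => (inner ℝ x (e o) : ℝ)) h
  simp [arc, inner_sub_left, inner_smul_left, inner_e, h₁] at h'
  exact h'

lemma body_ne_convexHull {o i₁ : Fin m} (h₁ : i₁ ≠ o) {F : Set (Euc m)} (hF : F.Finite) :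
    body o ≠ convexHull ℝ F := by
  intro h
  have hsub : arc o i₁ '' Ioo (0 : ℝ) (1 / 2) ⊆ F := by
    rintro _ ⟨t, ht, rfl⟩
    exact extremePoints_convexHull_subset (h ▸ arc_mem_extremePoints h₁ ht)
  exact ((Ioo_infinite (by norm_num)).image (arc_injective h₁).injOn) (hF.subset hsub)

end AsymmetricBody

open AsymmetricBody

theorem stmt10 (m : ℕ) (hm : 2 ≤ m) :
    ∃ K' : Set (Euc m),
      IsCompact K' ∧ Convex ℝ K' ∧ (interior K').Nonempty ∧
      (∀ F : Set (Euc m), F.Finite → K' ≠ convexHull ℝ F) ∧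
      (∀ A : Euc m → Euc m, IsSimilarity A → A '' K' = K' → ∀ x, A x = x) := by
  have h₁ : (⟨1, by omega⟩ : Fin m) ≠ ⟨0, by omega⟩ := by simp
  refine ⟨body ⟨0, by omega⟩, isCompact_body _, convex_convexHull _ _, interior_body_nonempty _,
    fun F hF => body_ne_convexHull h₁ hF, ?_⟩
  rintro A ⟨c, U, v, hc, hA⟩ hK x
  obtain ⟨rfl, rfl⟩ := similarity_eq_linear _ hc hA hK
  have hAU : A = U := funext fun y => by simp [hA]
  rw [hAU] at hK ⊢
  exact eq_id_of_map_p (map_p _ h₁ hK) x
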